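/- arXiv:1601.07975 — 2 statements merged into one kernel-verified Lean document; each statement's English description precedes it below -/
import Mathlib

section
/- Let b ≥ 2, k ≥ 1, j ≥ 1. The number of spanning trees of the astute graph G_{k−1,j} oriented towards any fixed node equals b^{j·b^{k−1} − k}. -/
/-- The target of the edge of the astute graph `G_{s,n}` leaving the node `p`
with label `a`: the word of `p` is shifted one place (dropping its first symbol
and appending `a`) and the counter is increased by one modulo `n`. -/
def astuteStep (b s n : ℕ) (p : (Fin s → Fin b) × ZMod n) (a : Fin b) :
    (Fin s → Fin b) × ZMod n :=
  (fun i => if h : (i : ℕ) + 1 < s then p.1 ⟨(i : ℕ) + 1, h⟩ else a, p.2 + 1)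

/-!
Write `A` for the adjacency matrix of a balanced multigraph `G` on `N` nodes, all of out-degree `d`.
The rows and the columns of the Laplacian `d - A` sum to zero, so its adjugate is constant, and by
the matrix-tree theorem each entry is the number `τ(G)` of spanning trees oriented towards any fixed
node. Hence `N * τ(G)` is the trace of this adjugate, which by Jacobi's formula is the derivative at
`d` of the characteristic polynomial of `A`.

For the incidence matrices `S` and `T` sending edges to their sources and targets, `S * T` is the
adjacency matrix of `G` and `T * S` that of its line graph, so the two characteristic polynomials
differ by a power of `X` only. As `d` is a root of both, comparing derivatives at `d` gives Knuth's
relation between the tree counts of `G` and of its line graph. Now `G_{s+1,n}` is the line graph of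
`G_{s,n}`, and `G_{0,n}` is a cycle with `b` parallel edges at each step, in which every choice of
edges is a spanning tree.
-/

open Matrix Polynomial

section LinearAlgebra

variable {R n : Type*} [CommRing R] [Fintype n] [DecidableEq n]

theorem derivative_det_eq_trace_adjugate_mul (M : Matrix n n R[X]) :
    derivative M.det = trace (M.adjugate * M.map derivative) := by
  have column_expansion (j : n) : (M.adjugate * M.map derivative) j j =
      (M.updateCol j fun i ↦ derivative (M i j)).det := by
    rw [← cramer_apply, cramer_eq_adjugate_mulVec]
    rfl
  simp_rw [trace, diag_apply, column_expansion, det_apply', derivative_sum]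
  rw [Finset.sum_comm]
  refine Finset.sum_congr rfl fun σ _ ↦ ?_
  rw [derivative_intCast_mul, derivative_prod_finset, Finset.mul_sum]
  refine Finset.sum_congr rfl fun j _ ↦ ?_
  rw [← Finset.prod_erase_mul _ _ (Finset.mem_univ j), updateCol_self]
  congr 2
  exact Finset.prod_congr rfl fun i hi ↦ (updateCol_ne (Finset.ne_of_mem_erase hi)).symm

theorem derivative_charpoly (A : Matrix n n R) :
    derivative A.charpoly = trace (charmatrix A).adjugate := by
  have derivative_charmatrix : (charmatrix A).map derivative = 1 := by
    ext1 i j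
    obtain rfl | hij := eq_or_ne i j
    · simp
    · simp [hij]
  rw [charpoly, derivative_det_eq_trace_adjugate_mul, derivative_charmatrix, mul_one]

theorem eval_derivative_charpoly (A : Matrix n n R) (t : R) :
    (derivative A.charpoly).eval t = trace (scalar n t - A).adjugate := by
  have eval_charmatrix : (evalRingHom t).mapMatrix (charmatrix A) = scalar n t - A := by
    ext i j
    obtain rfl | hij := eq_or_ne i j
    · simp
    · simp [hij]
  rw [derivative_charpoly, ← eval_charmatrix, ← RingHom.map_adjugate, ← coe_evalRingHom,
    AddMonoidHom.map_trace]
  rfl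

theorem adjugate_apply_eq_of_mulVec_one_eq_zero {M : Matrix n n R} (hM : M *ᵥ 1 = 0) (i i' j : n) :
    M.adjugate i j = M.adjugate i' j := by
  -- The difference of two unit rows sums to zero, so the all-ones vector stays in the kernel.
  have hdiff : (M.updateRow j (Pi.single i 1 - Pi.single i' 1)).det = 0 := by
    refine det_eq_zero_of_mulVec_eq_zero_of_mem_nonZeroDivisors (v := 1) (i := j) ?_ (one_mem _)
    ext k
    obtain rfl | hk := eq_or_ne k j
    · simp only [mulVec, updateRow_self, sub_dotProduct, Pi.zero_apply]
      simp
    · simpa [mulVec, hk] using congrFun hM k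
  rw [adjugate_apply, adjugate_apply, ← sub_eq_zero, ← hdiff]
  exact ((detRowAlternating (R := R)).map_update_sub M j _ _).symm

theorem trace_adjugate_of_mulVec_one_of_one_vecMul {M : Matrix n n R} (hrow : M *ᵥ 1 = 0)
    (hcol : 1 ᵥ* M = 0) (i : n) : trace M.adjugate = Fintype.card n * M.adjugate i i := by
  have hcolT : Mᵀ *ᵥ 1 = 0 := by rwa [mulVec_transpose]
  have adjugate_diag (j : n) : M.adjugate j j = M.adjugate i i :=
    calc
      M.adjugate j j = M.adjugate i j := adjugate_apply_eq_of_mulVec_one_eq_zero hrow j i j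
      _ = Mᵀ.adjugate j i := by rw [← adjugate_transpose, transpose_apply]
      _ = Mᵀ.adjugate i i := adjugate_apply_eq_of_mulVec_one_eq_zero hcolT j i i
      _ = M.adjugate i i := by rw [← adjugate_transpose, transpose_apply]
  simp [trace, adjugate_diag]

theorem adjugate_apply_self (M : Matrix n n R) (i : n) :
    M.adjugate i i =
      (M.submatrix Subtype.val Subtype.val : Matrix {j // j ≠ i} {j // j ≠ i} R).det := by
  rw [adjugate_apply, twoBlockTriangular_det _ (· ≠ i)]
  · have hminor : toSquareBlockProp (M.updateRow i (Pi.single i 1)) (· ≠ i) =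
        M.submatrix Subtype.val Subtype.val := by
      ext j k
      simp [toSquareBlockProp, updateRow_ne j.2]
    have hcorner : toSquareBlockProp (M.updateRow i (Pi.single i 1)) (¬ · ≠ i) = 1 := by
      ext ⟨j, hj⟩ ⟨k, hk⟩
      obtain rfl := not_not.1 hj
      obtain rfl := not_not.1 hk
      simp [toSquareBlockProp]
    rw [hminor, hcorner, det_one, mul_one]
  · intro j hj k hk
    obtain rfl := not_not.1 hj
    simp [hk]

end LinearAlgebra

section OrientedTrees

variable {V : Type*} [DecidableEq V] {ρ : V}

/-- The self-map of `V` that moves every node to its chosen parent and fixes the root `ρ`. -/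
def parentMap (ρ : V) (parent : {p // p ≠ ρ} → V) (q : V) : V :=
  if h : q = ρ then ρ else parent ⟨q, h⟩

/-- A choice of parents is a spanning tree oriented towards `ρ` when every node has `ρ` among its
ancestors. -/
def IsOrientedTree (ρ : V) (parent : {p // p ≠ ρ} → V) : Prop :=
  ∀ p, ∃ m : ℕ, (parentMap ρ parent)^[m] p = ρ

/-- The Laplacian of the graph of a choice of parents, with the row and column of the root `ρ`
removed. -/
def parentLaplacian (parent : {p // p ≠ ρ} → V) : Matrix {p // p ≠ ρ} {p // p ≠ ρ} ℤ :=
  of fun p q ↦ (if p = q then 1 else 0) - if parent p = q then 1 else 0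

variable {parent : {p // p ≠ ρ} → V}

theorem parentMap_root : parentMap ρ parent ρ = ρ := dif_pos rfl

theorem parentMap_coe (p : {p // p ≠ ρ}) : parentMap ρ parent p = parent p := dif_neg p.2

theorem exists_iterate_parentMap_parent_iff (p : {p // p ≠ ρ}) :
    (∃ m : ℕ, (parentMap ρ parent)^[m] (parent p) = ρ) ↔
      ∃ m : ℕ, (parentMap ρ parent)^[m] p = ρ := by
  rw [← parentMap_coe (parent := parent) p]
  constructor
  · rintro ⟨m, hm⟩
    exact ⟨m + 1, hm⟩
  · rintro ⟨m, hm⟩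
    exact ⟨m, by rw [← Function.iterate_succ_apply, Function.iterate_succ_apply', hm,
      parentMap_root]⟩

/-- The number of edges on the path from a node to the root of an oriented tree. -/
def IsOrientedTree.height (h : IsOrientedTree ρ parent) (p : V) : ℕ := Nat.find (h p)

theorem IsOrientedTree.height_parent_lt (h : IsOrientedTree ρ parent) (p : {p // p ≠ ρ}) :
    h.height (parent p) < h.height p := by
  have hp : (parentMap ρ parent)^[h.height p] p = ρ := Nat.find_spec (h p)
  obtain ⟨m, hm⟩ : ∃ m, h.height p = m + 1 :=
    Nat.exists_eq_succ_of_ne_zero fun h0 ↦ p.2 (by simpa [h0] using hp)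
  rw [hm, Function.iterate_succ_apply, parentMap_coe] at hp
  exact hm ▸ Nat.lt_succ_of_le (Nat.find_min' (h (parent p)) hp)

theorem isOrientedTree_of_add_one {n : ℕ} [NeZero n] (c : V → ZMod n) (hc : Function.Injective c)
    (hparent : ∀ p, c (parent p) = c p + 1) : IsOrientedTree ρ parent := by
  intro p
  have walk (m : ℕ) :
      (parentMap ρ parent)^[m] p = ρ ∨ c ((parentMap ρ parent)^[m] p) = c p + m := by
    induction m with
    | zero => simp
    | succ m ih =>
      rw [Function.iterate_succ_apply']
      by_cases hq : (parentMap ρ parent)^[m] p = ρ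
      · exact .inl (by rw [hq, parentMap_root])
      · refine .inr ?_
        rw [parentMap_coe ⟨_, hq⟩, hparent, ih.resolve_left hq, Nat.cast_succ, add_assoc]
  refine ⟨(c ρ - c p).val, (walk _).elim id fun h ↦ hc ?_⟩
  rw [h, ZMod.natCast_zmod_val, add_sub_cancel]

variable [Fintype V]

theorem det_parentLaplacian_of_isOrientedTree (h : IsOrientedTree ρ parent) :
    (parentLaplacian parent).det = 1 := by
  -- A parent has smaller height than its child, so the order on heights has to be reversed.
  let b (p : {p // p ≠ ρ}) : ℕᵒᵈ := OrderDual.toDual (h.height p)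
  have entry_eq (p q : {p // p ≠ ρ}) (hpq : h.height p ≤ h.height q) :
      parentLaplacian parent p q = (1 : Matrix _ _ ℤ) p q := by
    have hne : parent p ≠ q := fun he ↦ (h.height_parent_lt p).not_ge (he ▸ hpq)
    simp [parentLaplacian, hne, one_apply]
  have triangular : (parentLaplacian parent).BlockTriangular b := fun p q hpq ↦ by
    have hlt : h.height p < h.height q := hpq
    rw [entry_eq p q hlt.le, one_apply_ne (by rintro rfl; exact hlt.false)]
  rw [triangular.det]
  refine Finset.prod_eq_one fun a _ ↦ ?_
  have block_eq_one : (parentLaplacian parent).toSquareBlock b a = 1 := by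
    ext ⟨p, rfl⟩ ⟨q, hq⟩
    simp only [toSquareBlock_def, of_apply, entry_eq p q (congrArg OrderDual.ofDual hq).ge,
      one_apply, Subtype.mk.injEq]
  rw [block_eq_one, det_one]

theorem det_parentLaplacian_of_not_isOrientedTree (h : ¬ IsOrientedTree ρ parent) :
    (parentLaplacian parent).det = 0 := by
  classical
  -- The indicator of the nodes that never reach `ρ` lies in the kernel.
  obtain ⟨p₀, hp₀⟩ := not_forall.1 h
  let stray (p : V) : ℤ := if ∃ m : ℕ, (parentMap ρ parent)^[m] p = ρ then 0 else 1
  have stray_root : stray ρ = 0 := if_pos ⟨0, rfl⟩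
  have stray_parent (p : {p // p ≠ ρ}) : stray (parent p) = stray p := by
    simp only [stray, exists_iterate_parentMap_parent_iff]
  have hp₀ρ : p₀ ≠ ρ := fun he ↦ hp₀ ⟨0, he⟩
  refine exists_mulVec_eq_zero_iff.1 ⟨fun p ↦ stray p, fun h0 ↦ ?_, funext fun p ↦ ?_⟩
  · simpa [stray, hp₀] using congrFun h0 ⟨p₀, hp₀ρ⟩
  · have sum_parent : ∑ q : {q // q ≠ ρ}, (if parent p = q then stray q else 0) =
        stray (parent p) := by
      obtain he | hne := eq_or_ne (parent p) ρ
      · simp [he, stray_root, fun q : {q // q ≠ ρ} ↦ q.2.symm]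
      · rw [Fintype.sum_eq_single ⟨parent p, hne⟩ fun q hq ↦
          if_neg fun he ↦ hq (Subtype.ext he.symm), if_pos rfl]
    simp [mulVec, dotProduct, parentLaplacian, sub_mul, sum_parent, stray_parent]

end OrientedTrees

section MatrixTree

variable {V L : Type*} [Fintype V] [DecidableEq V] [Fintype L]

/-- The number of spanning trees oriented towards `ρ` of the multigraph whose edges are the
`p → step p a`, one for each node `p` and each label `a`. -/
noncomputable def orientedTreeCount (step : V → L → V) (ρ : V) : ℕ :=
  Nat.card {g : {p // p ≠ ρ} → L // IsOrientedTree ρ fun p ↦ step p (g p)}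

/-- The adjacency matrix of the multigraph with edges `p → step p a`: the entry at `(p, q)` counts
the labels `a` that lead from `p` to `q`. -/
def stepAdjMatrix (step : V → L → V) : Matrix V V ℤ :=
  of fun p q ↦ ∑ a, if step p a = q then 1 else 0

/-- The Laplacian of the multigraph with edges `p → step p a`, all of whose out-degrees are equal to
the number of labels. -/
def stepLaplacian (step : V → L → V) : Matrix V V ℤ :=
  scalar V (Fintype.card L : ℤ) - stepAdjMatrix step

/-- The multigraph with edges `p → step p a` is balanced when its in-degrees agree with its
out-degrees. -/
def IsBalanced (step : V → L → V) : Prop :=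
  ∀ q, ∑ p, stepAdjMatrix step p q = Fintype.card L

theorem stepLaplacian_apply (step : V → L → V) (p q : V) :
    stepLaplacian step p q =
      ∑ a, ((if p = q then 1 else 0) - if step p a = q then 1 else 0) := by
  simp [stepLaplacian, stepAdjMatrix, Matrix.natCast_apply, Finset.sum_sub_distrib]

theorem stepLaplacian_mulVec_one (step : V → L → V) : stepLaplacian step *ᵥ 1 = 0 := by
  ext p
  simp only [mulVec, dotProduct_one, stepLaplacian_apply]
  rw [Finset.sum_comm]
  simp

theorem IsBalanced.one_vecMul_stepLaplacian {step : V → L → V} (h : IsBalanced step) :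
    1 ᵥ* stepLaplacian step = 0 := by
  ext q
  simp [vecMul, one_dotProduct, stepLaplacian, h q, Matrix.natCast_apply]

theorem eval_charpoly_stepAdjMatrix [Nonempty V] (step : V → L → V) :
    (stepAdjMatrix step).charpoly.eval (Fintype.card L : ℤ) = 0 := by
  rw [eval_charpoly]
  exact exists_mulVec_eq_zero_iff.1 ⟨1, one_ne_zero, stepLaplacian_mulVec_one step⟩

/-- The matrix-tree theorem: expanding the rows of the reduced Laplacian over the labels yields one
summand for each choice of parents. -/
theorem orientedTreeCount_eq_adjugate (step : V → L → V) (ρ : V) :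
    (orientedTreeCount step ρ : ℤ) = (stepLaplacian step).adjugate ρ ρ := by
  classical
  let minor : Matrix {p // p ≠ ρ} {p // p ≠ ρ} ℤ := (stepLaplacian step).submatrix (↑) (↑)
  have expand_rows : minor.det =
      ∑ g : {p // p ≠ ρ} → L, (parentLaplacian fun p ↦ step p (g p)).det := by
    have row_eq_sum (p : {p // p ≠ ρ}) : minor p = ∑ a, fun q : {p // p ≠ ρ} ↦
        (if p = q then 1 else 0) - if step p a = q then (1 : ℤ) else 0 := by
      ext q
      simp [minor, stepLaplacian_apply, Finset.sum_apply, Subtype.ext_iff]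
    rw [det, funext row_eq_sum]
    exact (detRowAlternating (R := ℤ)).toMultilinearMap.map_sum _
  have summand (g : {p // p ≠ ρ} → L) : (parentLaplacian fun p ↦ step p (g p)).det =
      if IsOrientedTree ρ fun p ↦ step p (g p) then 1 else 0 := by
    split_ifs with hg
    · exact det_parentLaplacian_of_isOrientedTree hg
    · exact det_parentLaplacian_of_not_isOrientedTree hg
  rw [adjugate_apply_self, expand_rows, orientedTreeCount, Nat.card_eq_fintype_card,
    Fintype.card_subtype]
  simp [summand]

theorem IsBalanced.card_mul_orientedTreeCount {step : V → L → V} (h : IsBalanced step) (ρ : V) :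
    (Fintype.card V * orientedTreeCount step ρ : ℤ) =
      (derivative (stepAdjMatrix step).charpoly).eval (Fintype.card L : ℤ) := by
  rw [eval_derivative_charpoly, ← stepLaplacian, orientedTreeCount_eq_adjugate,
    trace_adjugate_of_mulVec_one_of_one_vecMul (stepLaplacian_mulVec_one step)
      h.one_vecMul_stepLaplacian ρ]

end MatrixTree

section LineGraph

variable {V W L : Type*}

/-- Through `e`, the nodes of the graph of `lineStep` are the edges of the graph of `step`, and the
label `a` leads from each edge to the edge with label `a` leaving its target: the first graph is the
line graph of the second. -/
def IsLineGraph (step : V → L → V) (lineStep : W → L → W) (e : W ≃ V × L) : Prop :=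
  ∀ w a, e (lineStep w a) = (step (e w).1 (e w).2, a)

variable [DecidableEq V] [DecidableEq W] [Fintype L]
  {step : V → L → V} {lineStep : W → L → W} {e : W ≃ V × L}

theorem IsLineGraph.stepAdjMatrix_apply (h : IsLineGraph step lineStep e) (w w' : W) :
    stepAdjMatrix lineStep w w' = if step (e w).1 (e w).2 = (e w').1 then 1 else 0 := by
  have lineStep_eq_iff (a : L) :
      lineStep w a = w' ↔ step (e w).1 (e w).2 = (e w').1 ∧ a = (e w').2 := by
    rw [← e.apply_eq_iff_eq, h w, Prod.ext_iff]
  rw [stepAdjMatrix, of_apply, Fintype.sum_eq_single (e w').2 fun a ha ↦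
    if_neg fun h' ↦ ha ((lineStep_eq_iff a).1 h').2]
  simp [lineStep_eq_iff]

variable [Fintype V] [Fintype W]

theorem IsLineGraph.isBalanced (h : IsLineGraph step lineStep e) (hstep : IsBalanced step) :
    IsBalanced lineStep := by
  intro w'
  simp only [h.stepAdjMatrix_apply]
  rw [e.sum_comp fun x ↦ if step x.1 x.2 = (e w').1 then 1 else 0, Fintype.sum_prod_type]
  exact hstep (e w').1

theorem IsLineGraph.charpoly_stepAdjMatrix (h : IsLineGraph step lineStep e) :
    X ^ Fintype.card V * (stepAdjMatrix lineStep).charpoly =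
      X ^ Fintype.card W * (stepAdjMatrix step).charpoly := by
  let target : Matrix W V ℤ := of fun w v ↦ if step (e w).1 (e w).2 = v then 1 else 0
  let source : Matrix V W ℤ := of fun v w ↦ if (e w).1 = v then 1 else 0
  have target_mul_source : target * source = stepAdjMatrix lineStep := by
    ext w w'
    simp [target, source, mul_apply, h.stepAdjMatrix_apply, eq_comm]
  have source_mul_target : source * target = stepAdjMatrix step := by
    ext v v'
    simp only [source, target, mul_apply, of_apply, ite_mul, one_mul, zero_mul]
    rw [e.sum_comp fun x ↦ if x.1 = v then if step x.1 x.2 = v' then 1 else 0 else 0,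
      Fintype.sum_prod_type, Fintype.sum_eq_single v fun u hu ↦ by simp [hu]]
    simp [stepAdjMatrix]
  rw [← target_mul_source, ← source_mul_target, charpoly_mul_comm']

theorem IsLineGraph.pow_mul_orientedTreeCount (h : IsLineGraph step lineStep e)
    (hstep : IsBalanced step) (ρ : V) (ρ' : W) :
    Fintype.card L ^ (Fintype.card V + 1) * orientedTreeCount lineStep ρ' =
      Fintype.card L ^ Fintype.card W * orientedTreeCount step ρ := by
  have : Nonempty V := ⟨ρ⟩
  have : Nonempty W := ⟨ρ'⟩
  have hderiv := congrArg (fun P ↦ (derivative P).eval (Fintype.card L : ℤ))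
    h.charpoly_stepAdjMatrix
  simp only [derivative_mul, eval_add, eval_mul, eval_pow, eval_X, eval_charpoly_stepAdjMatrix,
    mul_zero, zero_add] at hderiv
  rw [← hstep.card_mul_orientedTreeCount ρ,
    ← (h.isBalanced hstep).card_mul_orientedTreeCount ρ'] at hderiv
  have hcard : Fintype.card W = Fintype.card V * Fintype.card L := by
    rw [Fintype.card_congr e, Fintype.card_prod]
  refine Nat.eq_of_mul_eq_mul_left (Fintype.card_pos (α := V)) ?_
  zify
  rw [hcard] at hderiv ⊢
  push_cast at hderiv
  linear_combination hderiv

end LineGraph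

section Astute

/-- A node of `G_{s+1,n}` read as an edge of `G_{s,n}`: its last symbol is the label. -/
def astuteEdgeEquiv (b s n : ℕ) :
    (Fin (s + 1) → Fin b) × ZMod n ≃ ((Fin s → Fin b) × ZMod n) × Fin b where
  toFun p := ((Fin.init p.1, p.2), p.1 (Fin.last s))
  invFun q := (Fin.snoc q.1.1 q.2, q.1.2)
  left_inv p := by simp
  right_inv q := by simp

theorem isLineGraph_astuteStep (b s n : ℕ) :
    IsLineGraph (astuteStep b s n) (astuteStep b (s + 1) n) (astuteEdgeEquiv b s n) := by
  intro p a
  refine Prod.ext (Prod.ext (funext fun i ↦ ?_) rfl) ?_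
  · obtain hi | hi := lt_or_ge ((i : ℕ) + 1) s
    · simp [astuteEdgeEquiv, astuteStep, Fin.init, hi]
    · have hlast : i.succ = Fin.last s := Fin.ext (by simp; omega)
      simp [astuteEdgeEquiv, astuteStep, Fin.init, hi.not_gt, ← hlast, Fin.succ]
  · simp [astuteEdgeEquiv, astuteStep]

theorem isBalanced_astuteStep (b s n : ℕ) [NeZero n] : IsBalanced (astuteStep b s n) := by
  induction s with
  | zero =>
    intro q
    have step_eq_iff (p : (Fin 0 → Fin b) × ZMod n) (a : Fin b) :
        astuteStep b 0 n p a = q ↔ p = (q.1, q.2 - 1) := by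
      simp [astuteStep, Prod.ext_iff, eq_sub_iff_add_eq, eq_iff_true_of_subsingleton]
    simp only [stepAdjMatrix, of_apply, step_eq_iff]
    rw [Finset.sum_comm]
    simp
  | succ s ih => exact (isLineGraph_astuteStep b s n).isBalanced ih

variable {b s n : ℕ} [NeZero n]

theorem orientedTreeCount_astuteStep_zero (ρ : (Fin 0 → Fin b) × ZMod n) :
    orientedTreeCount (astuteStep b 0 n) ρ = b ^ (n - 1) := by
  have every_choice (g : {p // p ≠ ρ} → Fin b) :
      IsOrientedTree ρ fun p ↦ astuteStep b 0 n p (g p) :=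
    isOrientedTree_of_add_one Prod.snd (fun _ _ h ↦ Prod.ext (Subsingleton.elim _ _) h)
      fun _ ↦ rfl
  rw [orientedTreeCount, Nat.card_congr (Equiv.subtypeUnivEquiv every_choice)]
  simp [Fintype.card_subtype_compl, ZMod.card]

theorem pow_mul_orientedTreeCount_astuteStep (hb : 0 < b) (ρ : (Fin s → Fin b) × ZMod n) :
    b ^ (s + 1) * orientedTreeCount (astuteStep b s n) ρ = b ^ (n * b ^ s) := by
  induction s with
  | zero =>
    rw [orientedTreeCount_astuteStep_zero, ← pow_add]
    congr 1
    have := NeZero.pos n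
    lia
  | succ s ih =>
    let ρ' : (Fin s → Fin b) × ZMod n := (Fin.init ρ.1, ρ.2)
    have line_graph := (isLineGraph_astuteStep b s n).pow_mul_orientedTreeCount
      (isBalanced_astuteStep b s n) ρ' ρ
    simp only [Fintype.card_prod, Fintype.card_fun, Fintype.card_fin, ZMod.card] at line_graph
    refine Nat.eq_of_mul_eq_mul_left (pow_pos hb (n * b ^ s)) ?_
    calc
      b ^ (n * b ^ s) * (b ^ (s + 1 + 1) * orientedTreeCount (astuteStep b (s + 1) n) ρ)
        = b ^ (s + 1) * (b ^ (b ^ s * n + 1) * orientedTreeCount (astuteStep b (s + 1) n) ρ) := by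
          ring
      _ = b ^ (b ^ (s + 1) * n) * (b ^ (s + 1) * orientedTreeCount (astuteStep b s n) ρ') := by
          rw [line_graph]; ring
      _ = b ^ (n * b ^ s) * b ^ (n * b ^ (s + 1)) := by rw [ih]; ring

end Astute

/-- The number of spanning trees of the astute graph `G_{k−1,j}` oriented towards
a fixed node `ρ` equals `b^{j·b^{k−1} − k}`. A spanning tree oriented towards `ρ`
is a choice, for each node `p ≠ ρ`, of an outgoing edge (a label `g p`), such that
following the chosen edges from any node eventually reaches `ρ`. -/
theorem spanning_trees_astute (b k j : ℕ) (hb : 2 ≤ b) (hk : 1 ≤ k) (hj : 1 ≤ j)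
    [NeZero j] (ρ : (Fin (k - 1) → Fin b) × ZMod j) :
    Nat.card {g : {p : (Fin (k - 1) → Fin b) × ZMod j // p ≠ ρ} → Fin b //
      ∀ p : (Fin (k - 1) → Fin b) × ZMod j,
        ∃ m : ℕ,
          (fun q => if h : q = ρ then ρ else astuteStep b (k - 1) j q (g ⟨q, h⟩))^[m] p
            = ρ} = b ^ (j * b ^ (k - 1) - k) := by
  have hcount : b ^ k * orientedTreeCount (astuteStep b (k - 1) j) ρ = b ^ (j * b ^ (k - 1)) := by
    simpa only [Nat.sub_add_cancel hk] using pow_mul_orientedTreeCount_astuteStep (by lia) ρ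
  have hexp : k ≤ j * b ^ (k - 1) :=
    calc
      k ≤ b ^ (k - 1) := Nat.le_of_pred_lt (Nat.lt_pow_self hb)
      _ ≤ j * b ^ (k - 1) := Nat.le_mul_of_pos_left _ hj
  refine Nat.eq_of_mul_eq_mul_left (pow_pos (by lia : 0 < b) k) ?_
  rw [← pow_add, Nat.add_sub_cancel' hexp]
  exact hcount
end

section
/- Let b ≥ 2, k ≥ 1, and j ≥ 1. The number of Eulerian circuits in the astute graph G_{k−1,j} equals (b!)^{j·b^{k−1}} · b^{−k}. -/
/-!
Eulerian circuits with a prescribed first edge are the permutations of the edges that send every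
edge to one leaving its target and that consist of a single cycle. Without the last condition one
gets the transition systems, which choose at every vertex a bijection from the incoming to the
outgoing edges and so number `∏ v, (outdeg v)!`. For the matrix `P` of a permutation of a set `E`,
the determinant of `1 - P + 𝟙 eᵀ` is `|E|` if the permutation is a single cycle and `0` otherwise.
As a determinant is alternating in its rows, its average over all transition systems is its value
at the averaged matrix, the random walk on the edges, and `det (1 - A B) = det (1 - B A)` turns
this into the random walk on the vertices: this is the BEST theorem. Since `G_{s+1,n}` is the line
digraph of `G_{s,n}`, the same identity shows that the determinant is the same for all `s`; for
`s = 0` the walk is the rotation of `ZMod n`, a single cycle, so the determinant is `n`.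
-/

section PinnedLaplacian

open Equiv Finset Matrix

variable {α β R : Type*} [DecidableEq α] [DecidableEq β] [CommRing R]

/-- The Laplacian `1 - K` of a transition matrix `K` with `1` added to every entry of column `e`.
When the rows of `K` sum to `1`, this takes the place of the matrix with row and column `e` deleted
in the matrix-tree theorem. -/
def pinnedLaplacian (K : Matrix α α R) (e : α) : Matrix α α R :=
  1 - K + vecMulVec 1 (Pi.single e 1)

theorem pinnedLaplacian_apply (K : Matrix α α R) (e x : α) :
    pinnedLaplacian K e x = Pi.single x 1 - K x + Pi.single e 1 := by
  ext y
  simp [pinnedLaplacian, Matrix.one_apply, Pi.single_apply, eq_comm]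

variable [Fintype α] [Fintype β]

theorem det_pinnedLaplacian_submatrix_equiv (φ : α ≃ β) (K : Matrix β β R) (e : α) :
    (pinnedLaplacian (K.submatrix φ φ) e).det = (pinnedLaplacian K (φ e)).det := by
  rw [← det_submatrix_equiv_self φ]
  congr 1
  ext x y
  simp [pinnedLaplacian_apply, Pi.single_apply]

theorem det_pinnedLaplacian_submatrix_left (t : α → β) (Y : Matrix β α R) (e : α) :
    (pinnedLaplacian (Y.submatrix t id) e).det =
      (pinnedLaplacian (Y * (1 : Matrix β β R).submatrix t id) (t e)).det := by
  have hedge : pinnedLaplacian (Y.submatrix t id) e =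
      1 - (1 : Matrix β β R).submatrix t id * (Y - vecMulVec 1 (Pi.single e 1)) := by
    ext x y
    simp [pinnedLaplacian, Matrix.mul_apply, Matrix.one_apply, sub_add]
  have hvertex : pinnedLaplacian (Y * (1 : Matrix β β R).submatrix t id) (t e) =
      1 - (Y - vecMulVec 1 (Pi.single e 1)) * (1 : Matrix β β R).submatrix t id := by
    have hpin : (Pi.single e 1 : α → R) ᵥ* (1 : Matrix β β R).submatrix t id =
        Pi.single (t e) 1 := by
      ext v
      simp [Matrix.one_apply, Pi.single_apply, eq_comm]
    rw [Matrix.sub_mul, vecMulVec_mul, hpin, pinnedLaplacian, sub_add]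
  rw [hedge, hvertex, det_one_sub_mul_comm]

theorem det_one_sub_of_isNilpotent [IsReduced R] {N : Matrix α α R} (hN : IsNilpotent N) :
    (1 - N).det = 1 := by
  have heval := ((isNilpotent_charpoly_sub_pow_of_isNilpotent hN).map
    (Polynomial.evalRingHom 1)).eq_zero
  simpa [eval_charpoly, sub_eq_zero] using heval

theorem isNilpotent_updateRow_permMatrix_zero {π : Perm α} (hπ : π.IsCycleOn Set.univ) (e : α) :
    IsNilpotent ((π.permMatrix R).updateRow e 0) := by
  set N := (π.permMatrix R).updateRow e 0 with hN
  have visit : ∀ m x, (N ^ m) x ≠ 0 → ∀ i < m, (π ^ i) x ≠ e := by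
    intro m
    induction m with
    | zero => simp
    | succ m ih =>
      intro x hx i hi
      have hxe : x ≠ e := by
        rintro rfl
        exact hx (by ext y; simp [pow_succ', Matrix.mul_apply, hN])
      have hrow : (N ^ (m + 1)) x = (N ^ m) (π x) := by
        ext y
        simp [pow_succ', Matrix.mul_apply, hN, hxe, PEquiv.toMatrix_apply]
      cases i with
      | zero => simpa using hxe
      | succ i => exact ih (π x) (hrow ▸ hx) i (by lia)
  refine ⟨orderOf π, funext fun x => by_contra fun hx => ?_⟩
  obtain ⟨i, hi, hie⟩ := (hπ.2 (Set.mem_univ x) (Set.mem_univ e)).exists_pow_eq'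
  exact visit _ x hx i hi hie

theorem det_pinnedLaplacian_permMatrix_of_isCycleOn [IsReduced R] {π : Perm α}
    (hπ : π.IsCycleOn Set.univ) (e : α) :
    (pinnedLaplacian (π.permMatrix R) e).det = Fintype.card α := by
  set A := pinnedLaplacian (π.permMatrix R) e with hA
  have hA_apply : ∀ x y, A x y =
      (if x = y then 1 else 0) - (if x = π.symm y then 1 else 0) + if y = e then 1 else 0 := by
    intro x y
    simp [hA, pinnedLaplacian, PEquiv.toMatrix_apply, Matrix.one_apply, Equiv.eq_symm_apply,
      Pi.single_apply]
  have row_sum : ∑ x, (1 : R) • A x = (Fintype.card α : R) • Pi.single e 1 := by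
    ext y
    rw [Finset.sum_apply]
    simp [hA_apply, Finset.sum_add_distrib, Pi.single_apply]
  have minor : (A.updateRow e (Pi.single e 1)).det = 1 := by
    refine (det_eq_of_forall_row_eq_smul_add_const (fun x => if x = e then 0 else 1) e (by simp)
      ?_).trans (det_one_sub_of_isNilpotent (isNilpotent_updateRow_permMatrix_zero hπ e))
    intro x y
    obtain rfl | hx := eq_or_ne x e
    · simp [Matrix.one_apply, Pi.single_apply, eq_comm]
    · simp [hA_apply, hx, Matrix.one_apply, PEquiv.toMatrix_apply, Equiv.eq_symm_apply,
        eq_comm (a := e)]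
  calc A.det = (A.updateRow e (∑ x, (1 : R) • A x)).det := by
        simpa using (det_updateRow_sum A e fun _ => 1).symm
    _ = Fintype.card α := by rw [row_sum, det_updateRow_smul, minor, mul_one]

theorem det_pinnedLaplacian_permMatrix_of_not_isCycleOn [IsDomain R] {π : Perm α}
    (hπ : ¬ π.IsCycleOn Set.univ) (e : α) :
    (pinnedLaplacian (π.permMatrix R) e).det = 0 := by
  classical
  obtain ⟨x₀, hx₀⟩ : ∃ x, ¬ π.SameCycle x e := by
    by_contra! h
    exact hπ ⟨Set.bijOn_univ.mpr π.bijective, fun x _ y _ => (h x).trans (h y).symm⟩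
  let f : α → R := fun x => if π.SameCycle x₀ x then 1 else 0
  have hf_invariant : f ∘ π = f := by ext x; simp [f]
  have hf_pin : vecMulVec (1 : α → R) (Pi.single e 1) *ᵥ f = 0 := by
    rw [vecMulVec_mulVec]
    simp [f, hx₀]
  refine exists_mulVec_eq_zero_iff.mp ⟨f, fun hf => ?_, ?_⟩
  · simpa [f, Perm.SameCycle.refl] using congrFun hf x₀
  · rw [pinnedLaplacian, add_mulVec, sub_mulVec, one_mulVec, permMatrix_mulVec, hf_invariant,
      hf_pin, sub_self, add_zero]

end PinnedLaplacian

section Eulerian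

open Equiv Finset Matrix

variable {E V : Type*} [Fintype E] [DecidableEq E] [DecidableEq V]

/-- The transition systems of the digraph with edge set `E`: the permutations of the edges in which
every edge is followed by one leaving its target. Eulerian circuits are those with a single cycle.
-/
def transitionSystems (src tgt : E → V) : Finset (Perm E) := {π | ∀ x, src (π x) = tgt x}

variable {src tgt : E → V}

theorem mem_transitionSystems {π : Perm E} :
    π ∈ transitionSystems src tgt ↔ ∀ x, src (π x) = tgt x := by
  simp [transitionSystems]

theorem mul_swap_mem_transitionSystems {π : Perm E} {x y : E} (hxy : tgt x = tgt y) :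
    π * swap x y ∈ transitionSystems src tgt ↔ π ∈ transitionSystems src tgt := by
  have htgt : ∀ z, tgt (swap x y z) = tgt z := by
    intro z
    rw [swap_apply_def]
    split_ifs <;> simp_all
  rw [mem_transitionSystems, mem_transitionSystems, ← (swap x y).forall_congr_right]
  simp [htgt]

theorem sum_transitionSystems_mul_swap {M : Type*} [AddCommMonoid M] (g : Perm E → M) {x y : E}
    (hxy : tgt x = tgt y) :
    ∑ π ∈ transitionSystems src tgt, g (π * swap x y) = ∑ π ∈ transitionSystems src tgt, g π :=
  Finset.sum_equiv (Equiv.mulRight (swap x y))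
    (fun _ => (mul_swap_mem_transitionSystems hxy).symm) fun _ _ => rfl

theorem card_transitionSystems [Fintype V] {τ : Perm E} (hτ : τ ∈ transitionSystems src tgt) :
    #(transitionSystems src tgt) = ∏ v, (#{x | src x = v}).factorial := by
  have hcard := DomMulAct.stabilizer_card src
  simp only [Fintype.card_subtype] at hcard
  rw [← hcard]
  refine (Finset.card_equiv (Equiv.mulRight τ) fun g => ?_).symm
  rw [mem_transitionSystems] at hτ ⊢
  simp [funext_iff, ← hτ, τ.forall_congr_right (q := fun x => src (g x) = src x)]

section Averaging

variable {R M N : Type*} [CommRing R] [AddCommGroup M] [Module R M] [AddCommGroup N] [Module R N]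
  [IsAddTorsionFree N]

/-- Replacing row `x₀` by `d (π x)` gives the summand of `π * swap x₀ x` if `x ∈ insert x₀ s`, and
two equal rows otherwise. Summed over all `x` with the target of `x₀`, the new row vanishes. -/
theorem sum_map_piecewise_comp_eq_zero (f : M [⋀^E]→ₗ[R] N) (a d : E → M)
    (hd : ∀ v, ∑ y with src y = v, d y = 0) {s : Finset E} {x₀ : E} (hx₀ : x₀ ∉ s) :
    ∑ π ∈ transitionSystems src tgt, f (s.piecewise a (d ∘ π)) = 0 := by
  set S := transitionSystems src tgt
  set g : Perm E → N := fun π => f (s.piecewise a (d ∘ π))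
  let fiber : Finset E := {x | tgt x = tgt x₀}
  have update_eq (π : Perm E) (x : E) :
      f (Function.update (s.piecewise a (d ∘ π)) x₀ (d (π x))) =
        if x ∈ insert x₀ s then g (π * swap x₀ x) else 0 := by
    split_ifs with hx
    · congr 1
      ext z
      obtain rfl | hz := eq_or_ne z x₀
      · simp [hx₀]
      obtain rfl | hzx := eq_or_ne z x
      · simp [hz, Finset.mem_of_mem_insert_of_ne hx hz]
      · simp [hz, Finset.piecewise, swap_apply_of_ne_of_ne hz hzx]
    · obtain ⟨hne, hxs⟩ := not_or.mp (Finset.mem_insert.not.mp hx)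
      exact f.map_eq_zero_of_eq _ (by simp [hne, hxs]) (Ne.symm hne)
  have fiber_sum (π) (hπ : π ∈ S) : ∑ x ∈ fiber, d (π x) = 0 := by
    rw [← hd (tgt x₀)]
    exact Finset.sum_equiv π (by simp [fiber, mem_transitionSystems.mp hπ]) fun _ _ => rfl
  have total : #(fiber ∩ insert x₀ s) • ∑ π ∈ S, g π = 0 :=
    calc #(fiber ∩ insert x₀ s) • ∑ π ∈ S, g π
        = ∑ x ∈ fiber ∩ insert x₀ s, ∑ π ∈ S, g (π * swap x₀ x) := by
          rw [← Finset.sum_const]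
          refine Finset.sum_congr rfl fun x hx => (sum_transitionSystems_mul_swap g ?_).symm
          simpa [fiber, eq_comm] using (Finset.mem_inter.mp hx).1
      _ = ∑ π ∈ S, ∑ x ∈ fiber, f (Function.update (s.piecewise a (d ∘ π)) x₀ (d (π x))) := by
          rw [Finset.sum_comm]
          simp only [update_eq, Finset.sum_ite_mem]
      _ = ∑ π ∈ S, f (Function.update (s.piecewise a (d ∘ π)) x₀ (∑ x ∈ fiber, d (π x))) := by
          simp only [f.map_update_sum]
      _ = 0 := Finset.sum_eq_zero fun π hπ => by rw [fiber_sum π hπ, f.map_update_zero]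
  have hpos : #(fiber ∩ insert x₀ s) ≠ 0 :=
    Finset.card_ne_zero_of_mem (a := x₀) (by simp [fiber])
  exact (smul_eq_zero.mp total).resolve_left hpos

theorem sum_map_add_comp (f : M [⋀^E]→ₗ[R] N) (a d : E → M)
    (hd : ∀ v, ∑ y with src y = v, d y = 0) :
    ∑ π ∈ transitionSystems src tgt, f (a + d ∘ π) = #(transitionSystems src tgt) • f a := by
  simp only [f.map_add_univ]
  rw [Finset.sum_comm, Finset.sum_eq_single Finset.univ]
  · simp
  · intro s _ hs
    obtain ⟨x₀, hx₀⟩ : ∃ x, x ∉ s := by simpa [Finset.eq_univ_iff_forall] using hs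
    exact sum_map_piecewise_comp_eq_zero f a d hd hx₀
  · simp

end Averaging

/-- The matrix whose row `v` is the uniform distribution on the edges leaving `v` (and `0` if there
are none). -/
def departureMatrix (src : E → V) : Matrix V E ℚ :=
  Matrix.of fun v x => if src x = v then (#{y | src y = v} : ℚ)⁻¹ else 0

theorem sum_departureMatrix_sub_single (src : E → V) (v : V) :
    ∑ x with src x = v, (departureMatrix src (src x) - Pi.single x 1) = 0 := by
  ext y
  rw [Finset.sum_congr rfl fun x hx => by rw [(Finset.mem_filter.mp hx).2]]
  by_cases hy : src y = v
  · have hdeg : #{x | src x = v} ≠ 0 := Finset.card_ne_zero_of_mem (a := y) (by simpa)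
    simp [departureMatrix, Pi.single_apply, hy, hdeg]
  · simp [departureMatrix, Pi.single_apply, hy]

variable [Fintype V]

/-- The transition matrix of the simple random walk on the vertices, which leaves `v` along a
uniformly random edge. -/
def randomWalk (src tgt : E → V) : Matrix V V ℚ :=
  departureMatrix src * (1 : Matrix V V ℚ).submatrix tgt id

theorem sum_det_pinnedLaplacian_permMatrix (src tgt : E → V) (e : E) :
    ∑ π ∈ transitionSystems src tgt, (pinnedLaplacian (π.permMatrix ℚ) e).det =
      #(transitionSystems src tgt) * (pinnedLaplacian (randomWalk src tgt) (tgt e)).det := by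
  let A : E → E → ℚ := pinnedLaplacian ((departureMatrix src).submatrix tgt id) e
  let d : E → E → ℚ := fun y => departureMatrix src (src y) - Pi.single y 1
  have hrows (π) (hπ : π ∈ transitionSystems src tgt) :
      (pinnedLaplacian (π.permMatrix ℚ) e : E → E → ℚ) = A + d ∘ π := by
    funext x
    change pinnedLaplacian (π.permMatrix ℚ) e x = A x + d (π x)
    have hstep : π.permMatrix ℚ x = Pi.single (π x) 1 := by
      ext y
      simp [PEquiv.toMatrix_apply, Pi.single_apply, eq_comm]
    simp only [A, d, pinnedLaplacian_apply, hstep, mem_transitionSystems.mp hπ]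
    change _ = Pi.single x 1 - departureMatrix src (tgt x) + _ + _
    abel
  calc ∑ π ∈ transitionSystems src tgt, (pinnedLaplacian (π.permMatrix ℚ) e).det
      = ∑ π ∈ transitionSystems src tgt, detRowAlternating (A + d ∘ π) :=
        Finset.sum_congr rfl fun π hπ => congrArg detRowAlternating (hrows π hπ)
    _ = #(transitionSystems src tgt) * det A := by
        rw [sum_map_add_comp _ _ _ (sum_departureMatrix_sub_single src), nsmul_eq_mul]
        rfl
    _ = _ := by rw [randomWalk, ← det_pinnedLaplacian_submatrix_left]

theorem card_cyclic_transitionSystems_mul_card (src tgt : E → V) (e : E) :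
    (Nat.card {π : Perm E // (∀ x, src (π x) = tgt x) ∧ π.IsCycleOn Set.univ} *
        Fintype.card E : ℚ) =
      #(transitionSystems src tgt) * (pinnedLaplacian (randomWalk src tgt) (tgt e)).det := by
  classical
  have hcard : Nat.card {π : Perm E // (∀ x, src (π x) = tgt x) ∧ π.IsCycleOn Set.univ} =
      #{π ∈ transitionSystems src tgt | π.IsCycleOn Set.univ} := by
    rw [Nat.card_eq_fintype_card, Fintype.card_subtype, transitionSystems, Finset.filter_filter]
  rw [hcard, ← sum_det_pinnedLaplacian_permMatrix, ← nsmul_eq_mul, ← Finset.sum_const,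
    Finset.sum_filter]
  refine Finset.sum_congr rfl fun π _ => ?_
  split_ifs with hπ
  · exact (det_pinnedLaplacian_permMatrix_of_isCycleOn hπ e).symm
  · exact (det_pinnedLaplacian_permMatrix_of_not_isCycleOn hπ e).symm

end Eulerian

section Circuits

open Equiv Finset

variable {E : Type*} {n : ℕ}

theorem bijective_pow_apply [Fintype E] {π : Perm E} (hπ : π.IsCycleOn Set.univ)
    (hn : Fintype.card E = n) (e₀ : E) :
    Function.Bijective fun i : Fin n => (π ^ (i : ℕ)) e₀ := by
  rw [Fintype.bijective_iff_surjective_and_card, Fintype.card_fin, hn]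
  refine ⟨fun x => ?_, rfl⟩
  rw [← Finset.coe_univ] at hπ
  obtain ⟨i, hi, hx⟩ := hπ.exists_pow_eq (Finset.mem_univ e₀) (Finset.mem_univ x)
  exact ⟨⟨i, hn ▸ hi⟩, hx⟩

variable [NeZero n]

theorem eq_pow_apply_zero_of_apply_add_one {c : Fin n → E} {π : Perm E}
    (hc : ∀ i, c (i + 1) = π (c i)) (i : Fin n) : c i = (π ^ (i : ℕ)) (c 0) := by
  obtain ⟨m, rfl⟩ := Nat.exists_eq_succ_of_ne_zero (NeZero.ne n)
  induction i using Fin.induction with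
  | zero => rfl
  | succ i ih =>
    rw [← Fin.coeSucc_eq_succ, hc, ih, Fin.coeSucc_eq_succ, Fin.val_succ, pow_succ']
    rfl

theorem isCycleOn_univ_of_apply_add_one {c : Fin n → E} {π : Perm E}
    (hsurj : Function.Surjective c) (hc : ∀ i, c (i + 1) = π (c i)) : π.IsCycleOn Set.univ := by
  have reach (x : E) : π.SameCycle (c 0) x := by
    obtain ⟨i, rfl⟩ := hsurj x
    exact ⟨(i : ℕ), (eq_pow_apply_zero_of_apply_add_one hc i).symm⟩
  exact ⟨Set.bijOn_univ.mpr π.bijective, fun x _ y _ => (reach x).symm.trans (reach y)⟩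

variable [Fintype E] {π : Perm E}

theorem pow_add_one_apply (hπ : π.IsCycleOn Set.univ) (hn : Fintype.card E = n) (e₀ : E)
    (i : Fin n) : (π ^ ((i + 1 : Fin n) : ℕ)) e₀ = π ((π ^ (i : ℕ)) e₀) := by
  rw [← Finset.coe_univ] at hπ
  rw [← Perm.mul_apply, ← pow_succ', hπ.pow_apply_eq_pow_apply (Finset.mem_univ e₀),
    Finset.card_univ, hn]
  simp [Nat.ModEq, Fin.val_add]

theorem card_circuits_eq_card_cyclic (hn : Fintype.card E = n) (Q : E → E → Prop) (e₀ : E) :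
    Nat.card {c : Fin n → E // (∀ i, Q (c i) (c (i + 1))) ∧ Function.Bijective c ∧ c 0 = e₀} =
      Nat.card {π : Perm E // (∀ x, Q x (π x)) ∧ π.IsCycleOn Set.univ} := by
  let successor (c : Fin n → E) (hc : Function.Bijective c) : Perm E :=
    (Equiv.ofBijective c hc).permCongr (Equiv.addRight 1)
  have successor_apply (c hc i) : c (i + 1) = successor c hc (c i) := by
    simp [successor, Equiv.permCongr_apply, Equiv.ofBijective_symm_apply_apply]
  refine Nat.card_congr
    { toFun := fun c => ⟨successor c.1 c.2.2.1, fun x => ?_,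
        isCycleOn_univ_of_apply_add_one c.2.2.1.2 (successor_apply _ _)⟩
      invFun := fun π => ⟨fun i => (π.1 ^ (i : ℕ)) e₀, fun i => ?_,
        bijective_pow_apply π.2.2 hn e₀, by simp⟩
      left_inv := fun c => Subtype.ext (funext fun i => ?_)
      right_inv := fun π => Subtype.ext (Equiv.ext fun x => ?_) }
  · obtain ⟨i, rfl⟩ := c.2.2.1.2 x
    exact successor_apply _ _ i ▸ c.2.1 i
  · simpa only [pow_add_one_apply π.2.2 hn e₀ i] using π.2.1 _
  · obtain ⟨c, -, hc, rfl⟩ := c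
    exact (eq_pow_apply_zero_of_apply_add_one (successor_apply c hc) i).symm
  · have hbij := bijective_pow_apply π.2.2 hn e₀
    obtain ⟨i, rfl⟩ := hbij.2 x
    exact (successor_apply _ hbij i).symm.trans (pow_add_one_apply π.2.2 hn e₀ i)

/-- The BEST theorem: in an Eulerian digraph the determinant is `n * t / ∏ v, outdeg v`, where `t`
is the number of spanning trees oriented towards a fixed vertex. -/
theorem card_circuits_mul_card {V : Type*} [Fintype V] [DecidableEq E] [DecidableEq V]
    (hn : Fintype.card E = n) {src tgt : E → V} (hτ : (transitionSystems src tgt).Nonempty)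
    (e₀ : E) :
    (Nat.card {c : Fin n → E //
        (∀ i, src (c (i + 1)) = tgt (c i)) ∧ Function.Bijective c ∧ c 0 = e₀} * n : ℚ) =
      (∏ v, (#{x | src x = v}).factorial : ℕ) *
        (pinnedLaplacian (randomWalk src tgt) (tgt e₀)).det := by
  obtain ⟨τ, hτ⟩ := hτ
  rw [card_circuits_eq_card_cyclic hn fun x y => src y = tgt x, ← card_transitionSystems hτ,
    ← card_cyclic_transitionSystems_mul_card, hn]

end Circuits

section LabelledDigraph

open Equiv Finset Matrix

variable {V W B : Type*} [Fintype V] [DecidableEq V] [Fintype W] [DecidableEq W] [Fintype B]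

theorem card_filter_fst_eq (v : V) : #{x : V × B | x.1 = v} = Fintype.card B := by
  rw [← Finset.univ_product_univ, Finset.filter_product_left (· = v), Finset.card_product]
  simp [Finset.filter_eq']

theorem departureMatrix_fst_apply (v : V) (x : V × B) :
    departureMatrix Prod.fst v x = if x.1 = v then (Fintype.card B : ℚ)⁻¹ else 0 := by
  simp [departureMatrix, card_filter_fst_eq]

theorem randomWalk_fst_apply (t : V × B → V) (v w : V) :
    randomWalk Prod.fst t v w = ∑ a, if t (v, a) = w then (Fintype.card B : ℚ)⁻¹ else 0 := by
  rw [randomWalk, Matrix.mul_apply, Fintype.sum_prod_type_right]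
  refine Finset.sum_congr rfl fun a _ => (Fintype.sum_eq_single v fun u hu => ?_).trans ?_
  · simp [departureMatrix_fst_apply, hu]
  · simp [departureMatrix_fst_apply, Matrix.one_apply]

theorem randomWalk_fst_perm [Nonempty B] (ρ : Perm V) :
    randomWalk Prod.fst (fun x : V × B => ρ x.1) = ρ.permMatrix ℚ := by
  ext v w
  by_cases h : ρ v = w <;> simp [randomWalk_fst_apply, PEquiv.toMatrix_apply, h]

theorem det_pinnedLaplacian_randomWalk_lineDigraph (φ : V × B ≃ W) {t : V × B → V}
    {u : W × B → W} (hu : ∀ x a, u (φ x, a) = φ (t x, a)) (x : V × B) :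
    (pinnedLaplacian (randomWalk Prod.fst u) (φ x)).det =
      (pinnedLaplacian (randomWalk Prod.fst t) (t x)).det := by
  classical
  have hwalk : (randomWalk Prod.fst u).submatrix φ φ =
      (departureMatrix Prod.fst).submatrix t id := by
    ext x y
    obtain ⟨v, a⟩ := y
    by_cases h : t x = v <;>
      simp [randomWalk_fst_apply, departureMatrix_fst_apply, hu, h, eq_comm (a := v)]
  rw [← det_pinnedLaplacian_submatrix_equiv, hwalk, det_pinnedLaplacian_submatrix_left, randomWalk]

end LabelledDigraph

section Astute

open Equiv

variable {b s n : ℕ}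

/-- An edge of `G_{s,n}` as a node of `G_{s+1,n}`, which identifies the latter with the line digraph
of the former. -/
def appendSymbol : ((Fin s → Fin b) × ZMod n) × Fin b ≃ (Fin (s + 1) → Fin b) × ZMod n where
  toFun x := (Fin.snoc (α := fun _ => Fin b) x.1.1 x.2, x.1.2)
  invFun p := ((Fin.init p.1, p.2), p.1 (Fin.last s))
  left_inv x := by simp
  right_inv p := by simp

/-- A node of `G_{s+1,n}` as an edge of `G_{s,n}`, recorded by its target and by the symbol dropped
along it; by contrast `appendSymbol` records the source and the new symbol. -/
def removeFirstSymbol : (Fin (s + 1) → Fin b) × ZMod n ≃ ((Fin s → Fin b) × ZMod n) × Fin b where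
  toFun p := ((Fin.tail p.1, p.2 + 1), p.1 0)
  invFun x := (Fin.cons (α := fun _ => Fin b) x.2 x.1.1, x.1.2 - 1)
  left_inv p := by simp
  right_inv x := by simp

theorem astuteStep_eq (p : (Fin s → Fin b) × ZMod n) (a : Fin b) :
    astuteStep b s n p a = (removeFirstSymbol (appendSymbol (p, a))).1 := by
  refine Prod.ext (funext fun i => ?_) rfl
  simp only [astuteStep, removeFirstSymbol, appendSymbol, Equiv.coe_fn_mk, Fin.tail, Fin.snoc,
    Fin.val_succ]
  split_ifs <;> rfl

theorem astuteStep_zero (p : (Fin 0 → Fin b) × ZMod n) (a : Fin b) :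
    astuteStep b 0 n p a = (p.1, p.2 + 1) :=
  Prod.ext (Subsingleton.elim _ _) rfl

theorem astuteStep_appendSymbol (x : ((Fin s → Fin b) × ZMod n) × Fin b) (a : Fin b) :
    astuteStep b (s + 1) n (appendSymbol x) a = appendSymbol (astuteStep b s n x.1 x.2, a) := by
  have tail_snoc (w : Fin (s + 1) → Fin b) :
      Fin.tail (Fin.snoc (α := fun _ => Fin b) w a) =
        Fin.snoc (α := fun _ => Fin b) (Fin.tail w) a := by
    rw [← Fin.cons_self_tail w, ← Fin.cons_snoc_eq_snoc_cons, Fin.tail_cons, Fin.tail_cons]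
  simp [astuteStep_eq, removeFirstSymbol, appendSymbol, tail_snoc]

variable [NeZero n]

theorem isCycleOn_prodCongr_addRight_one {U : Type*} [Unique U] :
    Perm.IsCycleOn ((Equiv.refl U).prodCongr (Equiv.addRight (1 : ZMod n))) Set.univ := by
  refine isCycleOn_univ_of_apply_add_one (c := fun i : Fin n => (default, ZMod.finEquiv n i))
    (fun p => ?_) fun i => by simp
  obtain ⟨i, hi⟩ := (ZMod.finEquiv n).surjective p.2
  exact ⟨i, Prod.ext (Subsingleton.elim _ _) hi⟩

theorem det_pinnedLaplacian_randomWalk_astute [NeZero b] (p : (Fin s → Fin b) × ZMod n) :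
    (pinnedLaplacian (randomWalk Prod.fst fun x : _ × Fin b => astuteStep b s n x.1 x.2) p).det =
      n := by
  induction s with
  | zero =>
    let ρ : Perm ((Fin 0 → Fin b) × ZMod n) := (Equiv.refl _).prodCongr (Equiv.addRight 1)
    have hstep : (fun x : _ × Fin b => astuteStep b 0 n x.1 x.2) = fun x => ρ x.1 :=
      funext fun x => astuteStep_zero x.1 x.2
    rw [hstep, randomWalk_fst_perm,
      det_pinnedLaplacian_permMatrix_of_isCycleOn isCycleOn_prodCongr_addRight_one]
    simp [ZMod.card]
  | succ s ih =>
    obtain ⟨x, rfl⟩ := appendSymbol.surjective p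
    rw [det_pinnedLaplacian_randomWalk_lineDigraph appendSymbol astuteStep_appendSymbol, ih]

theorem transitionSystems_astute_nonempty :
    (transitionSystems Prod.fst
      fun x : ((Fin s → Fin b) × ZMod n) × Fin b => astuteStep b s n x.1 x.2).Nonempty :=
  ⟨appendSymbol.trans removeFirstSymbol, mem_transitionSystems.mpr fun _ => (astuteStep_eq ..).symm⟩

end Astute

/-- The number of Eulerian circuits in the astute graph `G_{k−1,j}` equals
`(b!)^{j·b^{k−1}} · b^{−k}`. Eulerian circuits are counted as cyclic sequences
using all `j·b^k` edges exactly once, normalized by fixing the starting edge `e₀`;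
the count is stated multiplicatively to avoid division: `#circuits · b^k = (b!)^{j·b^{k−1}}`. -/
theorem count_eulerian_astute (b k j : ℕ) (hb : 2 ≤ b) (hk : 1 ≤ k) (hj : 1 ≤ j)
    (e₀ : ((Fin (k - 1) → Fin b) × ZMod j) × Fin b) :
    Nat.card {c : Fin (j * b ^ k) → ((Fin (k - 1) → Fin b) × ZMod j) × Fin b //
      (∀ i : Fin (j * b ^ k),
        (c ⟨((i : ℕ) + 1) % (j * b ^ k),
            Nat.mod_lt _ (Nat.mul_pos hj (pow_pos (by omega) k))⟩).1 =
          astuteStep b (k - 1) j (c i).1 (c i).2) ∧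
      Function.Bijective c ∧
      c ⟨0, Nat.mul_pos hj (pow_pos (by omega) k)⟩ = e₀} * b ^ k =
    (Nat.factorial b) ^ (j * b ^ (k - 1)) := by
  obtain ⟨s, rfl⟩ := Nat.exists_eq_add_of_le' hk
  have : NeZero b := ⟨by omega⟩
  have : NeZero j := ⟨by omega⟩
  have hcard : Fintype.card (((Fin s → Fin b) × ZMod j) × Fin b) = j * b ^ (s + 1) := by
    simp only [Fintype.card_prod, Fintype.card_fun, Fintype.card_fin, ZMod.card]
    ring
  have next_eq (i : Fin (j * b ^ (s + 1))) (h) :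
      (⟨((i : ℕ) + 1) % (j * b ^ (s + 1)), h⟩ : Fin (j * b ^ (s + 1))) = i + 1 :=
    Fin.ext (by simp [Fin.val_add])
  have best := card_circuits_mul_card hcard transitionSystems_astute_nonempty e₀
  rw [det_pinnedLaplacian_randomWalk_astute] at best
  simp only [card_filter_fst_eq, Finset.prod_const, Finset.card_univ, Fintype.card_prod,
    Fintype.card_fun, Fintype.card_fin, ZMod.card] at best
  norm_cast at best
  simp only [next_eq, Nat.add_sub_cancel]
  refine Nat.eq_of_mul_eq_mul_right hj ?_
  rwa [mul_assoc, mul_comm _ j, mul_comm j (b ^ s)]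
end
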